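/- arXiv:1301.3810 — 3 statements merged into one kernel-verified Lean document; each statement's English description precedes it below -/
import Mathlib

section
/- Let d ≥ 1 and let a ∈ ℝ^d be such that the translation T ω = ω + a (mod ℤ^d) on the torus 𝕋^d = ℝ^d/ℤ^d is minimal. Then (𝕋^d, T) satisfies (eGRP): for every ω ∈ 𝕋^d, every ε > 0, and every s > 0, there exists an even integer q ≥ 2 such that dist(T^k ω, T^{k+q} ω) < ε for all integers 0 ≤ k ≤ ⌊s·q⌋. -/
open MeasureTheory Filter Metric Topology

noncomputable section

/-- The open unit disk `𝔻` in `ℂ`, as a (metric) subspace of `ℂ`. -/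
abbrev UnitDisk : Type := Metric.ball (0 : ℂ) 1

/-- A point `ω` has the even repetition property for `T` if for every `ε > 0` and `s > 0`
there is an even integer `q ≥ 2` with `dist (T^k ω, T^{k+q} ω) < ε` for all `0 ≤ k ≤ ⌊s·q⌋`. -/
def EvenRepetitionProperty {Ω : Type*} [PseudoMetricSpace Ω] (T : Ω → Ω) (ω : Ω) : Prop :=
  ∀ ε > (0 : ℝ), ∀ s > (0 : ℝ), ∃ q : ℕ, Even q ∧ 2 ≤ q ∧
    ∀ k : ℕ, k ≤ ⌊s * (q : ℝ)⌋₊ → dist (T^[k] ω) (T^[k + q] ω) < ε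

/-- Every minimal shift `T ω = ω + a` on the torus `𝕋^d` satisfies (eGRP):
every point has the even repetition property. -/
theorem minimal_torus_shift_eGRP
    (d : ℕ) (hd : 1 ≤ d) (a : Fin d → ℝ)
    (hmin : ∀ ω : Fin d → AddCircle (1 : ℝ),
      Dense (Set.range fun n : ℤ => fun i : Fin d => ω i + n • ((a i : AddCircle (1 : ℝ))))) :
    ∀ ω : Fin d → AddCircle (1 : ℝ),
      EvenRepetitionProperty
        (fun x : Fin d → AddCircle (1 : ℝ) => fun i : Fin d => x i + ((a i : AddCircle (1 : ℝ))))
        ω := by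
  intro ω ε hε s _
  let x : Fin d → AddCircle (1 : ℝ) := fun i => (a i : AddCircle (1 : ℝ))
  have hT : ∀ (n : ℕ) (y : Fin d → AddCircle (1 : ℝ)),
      (fun x : Fin d → AddCircle (1 : ℝ) => fun i : Fin d =>
        x i + ((a i : AddCircle (1 : ℝ))))^[n] y = y + n • x := by
    intro n
    induction n with
    | zero => intro y; simp
    | succ n ih =>
      intro y
      rw [Function.iterate_succ_apply', ih, succ_nsmul, ← add_assoc]
      rfl
  haveI : Fact ((0 : ℝ) < 1) := ⟨one_pos⟩
  obtain ⟨l, φ, hφ, hl⟩ := CompactSpace.tendsto_subseq (fun n : ℕ => n • x)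
  obtain ⟨N, hN⟩ := Metric.cauchySeq_iff'.1 hl.cauchySeq (ε / 2) (half_pos hε)
  have h1 := hN (N + 1) (Nat.le_succ N)
  have hlt : φ N < φ (N + 1) := hφ (Nat.lt_succ_self N)
  obtain ⟨n, hn⟩ := Nat.exists_eq_add_of_lt hlt
  have h2 : ‖(n + 1) • x‖ < ε / 2 := by
    have h3 : φ (N + 1) • x - φ N • x = (n + 1) • x := by
      rw [hn, add_assoc, add_nsmul]; abel
    rw [← h3, ← dist_eq_norm]
    exact h1
  refine ⟨(n + 1) + (n + 1), ⟨n + 1, rfl⟩, by omega, fun k _ => ?_⟩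
  rw [hT, hT, add_nsmul x k, ← add_assoc, dist_self_add_right, add_nsmul x (n + 1)]
  calc _ ≤ ‖(n + 1) • x‖ + ‖(n + 1) • x‖ := norm_add_le _ _
    _ < ε := by linarith

end
end

section
/- Let a ∈ ℝ be irrational and let T be the skew shift on the torus 𝕋² = ℝ²/ℤ² given by T(ω₁, ω₂) = (ω₁ + 2a, ω₁ + ω₂) (mod ℤ²). Then the following are equivalent: (i) a is not badly approximable; (ii) (𝕋², T) satisfies (eGRP); (iii) (𝕋², T, Leb) satisfies (eMRP), where Leb is the normalized Lebesgue measure on 𝕋²; (iv) (𝕋², T) satisfies (eTRP). -/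
open MeasureTheory Filter Metric Topology

noncomputable section

/-- `a ∈ ℝ` is badly approximable if `dist (q·a, ℤ) > c/|q|` for some `c > 0` and
all nonzero integers `q`. -/
def BadlyApproximable (a : ℝ) : Prop :=
  ∃ c > 0, ∀ q : ℤ, q ≠ 0 →
    c / |(q : ℝ)| < |(q : ℝ) * a - round ((q : ℝ) * a)|

/-- The skew shift `T(ω₁, ω₂) = (ω₁ + 2a, ω₁ + ω₂)` on the torus `𝕋² = (ℝ/ℤ)²`. -/
def skewShift (a : ℝ) (p : AddCircle (1 : ℝ) × AddCircle (1 : ℝ)) :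
    AddCircle (1 : ℝ) × AddCircle (1 : ℝ) :=
  (p.1 + ((2 * a : ℝ) : AddCircle (1 : ℝ)), p.1 + p.2)

lemma skewShift_iterate (a : ℝ) (ω : AddCircle (1 : ℝ) × AddCircle (1 : ℝ)) (k : ℕ) :
    (skewShift a)^[k] ω = (ω.1 + (2 * k : ℤ) • (a : AddCircle (1 : ℝ)),
      ω.2 + (k : ℤ) • ω.1 + (k * k - k : ℤ) • (a : AddCircle (1 : ℝ))) := by
  induction k with
  | zero => simp
  | succ k ih =>
    have h2 : ((2 * a : ℝ) : AddCircle (1 : ℝ)) = (2 : ℤ) • (a : AddCircle (1 : ℝ)) := by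
      rw [← AddCircle.coe_zsmul]; simp
    rw [Function.iterate_succ_apply', ih, skewShift, h2]
    ext1
    · push_cast; module
    · push_cast; module

lemma skewShift_dist (a : ℝ) (ω : AddCircle (1 : ℝ) × AddCircle (1 : ℝ)) (k q : ℕ) :
    dist ((skewShift a)^[k] ω) ((skewShift a)^[k + q] ω) =
      max ‖(2 * q : ℤ) • (a : AddCircle (1 : ℝ))‖
        ‖(q : ℤ) • ω.1 + (2 * k * q + q * q - q : ℤ) • (a : AddCircle (1 : ℝ))‖ := by
  rw [skewShift_iterate, skewShift_iterate, Prod.dist_eq, dist_comm, dist_eq_norm,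
    dist_comm (_ + _ + _), dist_eq_norm]
  congr 2
  · push_cast; module
  · push_cast; module

lemma small_multiples (x : AddCircle (1 : ℝ)) (N : ℕ) (hN : 1 ≤ N) (δ : ℝ) (hδ : δ ≤ 1 / 4)
    (h : ∀ k : ℕ, k ≤ N → ‖(k : ℤ) • x‖ < δ) : N * ‖x‖ < δ := by
  obtain ⟨t, rfl, ht⟩ : ∃ t : ℝ, (t : AddCircle (1 : ℝ)) = x ∧ ‖x‖ = |t| := by
    induction x using QuotientAddGroup.induction_on with
    | H t0 =>
      refine ⟨t0 - round t0, ?_, ?_⟩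
      · have h1 : ((round t0 : ℝ) : AddCircle (1 : ℝ)) = 0 := by
          rw [AddCircle.coe_eq_zero_iff]; exact ⟨round t0, by simp⟩
        rw [AddCircle.coe_sub, h1, sub_zero]
      · exact UnitAddCircle.norm_eq
  rw [ht]
  have key : ∀ k : ℕ, k ≤ N → k * |t| < δ := by
    have h1 : |t| < δ := by rw [← ht]; simpa using h 1 hN
    intro k
    induction k with
    | zero => intro _; have := abs_nonneg t; push_cast; linarith
    | succ k ih =>
      intro hk
      have h2 := ih (by omega)
      have h3 := h (k + 1) hk
      have h4 : |((k + 1 : ℕ) : ℝ) * t| = ((k + 1 : ℕ) : ℝ) * |t| := by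
        rw [abs_mul, Nat.abs_cast]
      rw [← AddCircle.coe_zsmul] at h3
      have h5 : ((k + 1 : ℕ) : ℤ) • t = ((k + 1 : ℕ) : ℝ) * t := by simp
      rw [h5, (AddCircle.norm_coe_eq_abs_iff (1 : ℝ) one_ne_zero).2, h4] at h3
      · exact h3
      · rw [h4, abs_one]; push_cast; linarith
  exact key N le_rfl

lemma not_bad_of_even_rep (a : ℝ) (ω : AddCircle (1 : ℝ) × AddCircle (1 : ℝ))
    (h : EvenRepetitionProperty (skewShift a) ω) : ¬ BadlyApproximable a := by
  rintro ⟨c, hc, hb⟩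
  obtain ⟨q, -, hq2, hq⟩ := h (min (1 / 8) (c / 4)) (by positivity) 1 one_pos
  set ε := min (1 / 8 : ℝ) (c / 4) with hε
  have hε1 : ε ≤ 1 / 8 := min_le_left _ _
  have hε2 : ε ≤ c / 4 := min_le_right _ _
  simp only [one_mul, Nat.floor_natCast, skewShift_dist, max_lt_iff] at hq
  have hs := small_multiples ((2 * q : ℤ) • (a : AddCircle (1 : ℝ))) q (by omega) (2 * ε)
    (by linarith) (by
      intro k hk
      have e : (k : ℤ) • ((2 * q : ℤ) • (a : AddCircle (1 : ℝ))) =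
        ((q : ℤ) • ω.1 + (2 * k * q + q * q - q : ℤ) • (a : AddCircle (1 : ℝ))) -
        ((q : ℤ) • ω.1 + (2 * (0 : ℕ) * q + q * q - q : ℤ) • (a : AddCircle (1 : ℝ))) := by
        push_cast; module
      rw [e]
      have h1 := (hq k hk).2
      have h2 := (hq 0 (by omega)).2
      have := norm_sub_le ((q : ℤ) • ω.1 + (2 * k * q + q * q - q : ℤ) • (a : AddCircle (1 : ℝ)))
        ((q : ℤ) • ω.1 + (2 * (0 : ℕ) * q + q * q - q : ℤ) • (a : AddCircle (1 : ℝ)))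
      linarith)
  have hb2 := hb (2 * q) (by omega)
  rw [← UnitAddCircle.norm_eq] at hb2
  rw [← AddCircle.coe_zsmul, zsmul_eq_mul] at hs
  have hq0 : (0 : ℝ) < q := by exact_mod_cast (by omega : 0 < q)
  have e : |((2 * q : ℤ) : ℝ)| = 2 * q := by push_cast; exact abs_of_pos (by positivity)
  rw [e, div_lt_iff₀ (by positivity)] at hb2
  nlinarith

lemma even_rep_of_not_bad (a : ℝ) (h : ¬ BadlyApproximable a)
    (ω : AddCircle (1 : ℝ) × AddCircle (1 : ℝ)) : EvenRepetitionProperty (skewShift a) ω := by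
  intro ε hε s hs
  set A : AddCircle (1 : ℝ) := (a : AddCircle (1 : ℝ)) with hA
  obtain ⟨M, hM⟩ := exists_nat_gt (2 / ε)
  have hM0 : (0 : ℝ) < M := lt_trans (by positivity) hM
  have hMn : 0 < M := by exact_mod_cast hM0
  set D : ℝ := 4 * M + 4 * M ^ 2 + 8 * s * M ^ 2 with hD
  have hDpos : 0 < D := by positivity
  have hq0 : ∃ p : ℕ, 0 < p ∧ p * ‖(p : ℤ) • A‖ ≤ ε / 4 / D := by
    by_contra hcon
    push Not at hcon
    refine h ⟨ε / 4 / D, by positivity, fun q hq => ?_⟩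
    have h1 := hcon q.natAbs (by omega)
    have h2 : ‖((q.natAbs : ℕ) : ℤ) • A‖ = ‖q • A‖ := by
      rcases Int.natAbs_eq q with h | h
      · rw [← h]
      · conv_rhs => rw [h]
        rw [neg_smul, norm_neg]
    rw [h2, hA, ← AddCircle.coe_zsmul, zsmul_eq_mul, UnitAddCircle.norm_eq, Nat.cast_natAbs,
      Int.cast_abs] at h1
    rw [div_lt_iff₀ (abs_pos.2 (by exact_mod_cast hq))]
    linarith
  obtain ⟨p, hp, hpc⟩ := hq0
  obtain ⟨m, hm, hmle⟩ := AddCircle.exists_norm_nsmul_le (T := (1 : ℝ))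
    ((2 * p : ℤ) • (ω.1 - A)) hMn
  obtain ⟨hm1, hmM⟩ := hm
  have hpR : (1 : ℝ) ≤ p := by exact_mod_cast hp
  have hmR : (1 : ℝ) ≤ m := by exact_mod_cast hm1
  have hmMR : (m : ℝ) ≤ M := by exact_mod_cast hmM
  set y := ‖(p : ℤ) • A‖ with hy
  have hy0 : 0 ≤ y := norm_nonneg _
  have hDc : D * (p * y) ≤ ε / 4 := by
    rw [le_div_iff₀ hDpos] at hpc; linarith
  push_cast at hmle
  have hz : (1 : ℝ) / (M + 1) < ε / 2 := by
    rw [div_lt_iff₀ (by positivity)]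
    rw [div_lt_iff₀ hε] at hM
    nlinarith
  have hns : ∀ n : ℕ, ‖(n : ℤ) • ((p : ℤ) • A)‖ ≤ n * y := by
    intro n
    rw [natCast_zsmul]
    exact norm_nsmul_le
  have hpy : 0 ≤ p * y := by positivity
  have hyp : y ≤ p * y := by nlinarith
  refine ⟨2 * (m * p), even_two_mul _, by nlinarith, fun k hk => ?_⟩
  have hkR : (k : ℝ) ≤ s * (2 * (m * p)) := by
    have := (Nat.le_floor_iff (by positivity)).1 hk
    push_cast at this
    exact this
  rw [skewShift_dist, max_lt_iff]
  have hM2 : (0 : ℝ) < M ^ 2 := by positivity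
  have hmm : (m : ℝ) ^ 2 ≤ M ^ 2 := by gcongr
  constructor
  · have e : (2 * ((2 * (m * p) : ℕ) : ℤ) : ℤ) • A = ((4 * m : ℕ) : ℤ) • ((p : ℤ) • A) := by
      push_cast; module
    rw [← hA, e]
    have h1 := hns (4 * m)
    push_cast at h1 ⊢
    have h2 : 4 * m * y ≤ (4 * M) * (p * y) := by gcongr
    have h3 : (4 * M) * (p * y) ≤ D * (p * y) := by
      gcongr
      rw [hD]
      have : 0 ≤ 8 * s * (M : ℝ) ^ 2 := by positivity
      linarith
    linarith
  · have e : (((2 * (m * p) : ℕ) : ℤ)) • ω.1 + (2 * k * ((2 * (m * p) : ℕ) : ℤ) +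
        ((2 * (m * p) : ℕ) : ℤ) * ((2 * (m * p) : ℕ) : ℤ) - ((2 * (m * p) : ℕ) : ℤ) : ℤ) • A =
        m • ((2 * p : ℤ) • (ω.1 - A)) +
        ((4 * k * m + 4 * m ^ 2 * p : ℕ) : ℤ) • ((p : ℤ) • A) := by
      rw [← natCast_zsmul]
      push_cast; module
    rw [← hA, e]
    have h1 := hns (4 * k * m + 4 * m ^ 2 * p)
    have h4 := norm_add_le (m • ((2 * p : ℤ) • (ω.1 - A)))
      (((4 * k * m + 4 * m ^ 2 * p : ℕ) : ℤ) • ((p : ℤ) • A))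
    have h2 : ((4 * k * m + 4 * m ^ 2 * p : ℕ) : ℝ) * y ≤ D * (p * y) := by
      push_cast
      calc (4 * (k : ℝ) * m + 4 * m ^ 2 * p) * y
          ≤ (4 * (s * (2 * (m * p))) * m + 4 * m ^ 2 * p) * y := by gcongr
        _ = ((8 * s + 4) * m ^ 2) * (p * y) := by ring
        _ ≤ ((8 * s + 4) * M ^ 2) * (p * y) := by gcongr
        _ ≤ D * (p * y) := by
          gcongr
          rw [hD]; nlinarith
    linarith

/-- For an irrational `a` and the skew shift on `𝕋²`, the following are equivalent:
(i) `a` is not badly approximable; (ii) (eGRP); (iii) (eMRP) w.r.t. normalized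
Lebesgue measure; (iv) (eTRP). -/
theorem skew_shift_eGRP_eMRP_eTRP_tfae (a : ℝ) (hirr : Irrational a) :
    [¬ BadlyApproximable a,
      ∀ ω : AddCircle (1 : ℝ) × AddCircle (1 : ℝ), EvenRepetitionProperty (skewShift a) ω,
      ∀ᵐ ω ∂(volume : Measure (AddCircle (1 : ℝ) × AddCircle (1 : ℝ))),
        EvenRepetitionProperty (skewShift a) ω,
      Dense {ω : AddCircle (1 : ℝ) × AddCircle (1 : ℝ) |
        EvenRepetitionProperty (skewShift a) ω}].TFAE := by
  tfae_have 1 → 2 := fun h ω => even_rep_of_not_bad a h ω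
  tfae_have 2 → 3 := fun h => Eventually.of_forall h
  tfae_have 3 → 4 := fun h => Measure.dense_of_ae h
  tfae_have 4 → 1 := fun h => by
    obtain ⟨ω, hω⟩ := h.nonempty
    exact not_bad_of_even_rep a ω hω
  tfae_finish

end
end

section
/- Let a ∈ ℝ be irrational and let T be the skew shift on the torus 𝕋² = ℝ²/ℤ² given by T(ω₁, ω₂) = (ω₁ + 2a, ω₁ + ω₂) (mod ℤ²). If (𝕋², T) satisfies (eTRP), then a is not badly approximable. -/
open MeasureTheory Filter Metric Topology

noncomputable section

lemma skew_fst (a : ℝ) (ω : AddCircle (1 : ℝ) × AddCircle (1 : ℝ)) (k : ℕ) :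
    ((skewShift a)^[k] ω).1 = ω.1 + k • ((2 * a : ℝ) : AddCircle (1 : ℝ)) := by
  induction k with
  | zero => simp
  | succ k ih =>
    rw [Function.iterate_succ_apply']
    simp only [skewShift] at ih ⊢
    rw [ih, succ_nsmul]
    abel

lemma skew_snd (a : ℝ) (ω : AddCircle (1 : ℝ) × AddCircle (1 : ℝ)) (q k : ℕ) :
    ((skewShift a)^[k + q] ω).2 - ((skewShift a)^[k] ω).2 =
      (((skewShift a)^[q] ω).2 - ω.2) + k • (q • ((2 * a : ℝ) : AddCircle (1 : ℝ))) := by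
  induction k with
  | zero => simp
  | succ k ih =>
    have h1 := skew_fst a ω k
    have h2 := skew_fst a ω (k + q)
    rw [show k + 1 + q = (k + q) + 1 by ring, Function.iterate_succ_apply',
      Function.iterate_succ_apply']
    have e : ∀ p, (skewShift a p).2 = p.1 + p.2 := fun _ => rfl
    rw [e, e, add_sub_add_comm, ih, h1, h2, succ_nsmul, add_nsmul]
    abel

lemma small_multiples_s8 (t : ℝ) (ht : |t| ≤ 1 / 2) (N : ℕ)
    (h : ∀ k : ℕ, k ≤ N → ‖((k * t : ℝ) : AddCircle (1 : ℝ))‖ < 1 / 4) :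
    ∀ k : ℕ, k ≤ N → k * |t| < 1 / 4 := by
  have key : ∀ x : ℝ, |x| ≤ 1 / 2 → ‖(x : AddCircle (1 : ℝ))‖ = |x| := by
    intro x hx
    rw [AddCircle.norm_coe_eq_abs_iff (1 : ℝ) one_ne_zero]
    simpa using hx
  have habs : ∀ k : ℕ, |(k : ℝ) * t| = k * |t| := by
    intro k
    rw [abs_mul, Nat.abs_cast]
  intro k
  induction k with
  | zero => intro _; norm_num
  | succ k ih =>
    intro hk
    have h1 := ih (by omega)
    have h2 : |((k + 1 : ℕ) : ℝ) * t| ≤ 1 / 2 := by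
      rcases Nat.eq_zero_or_pos k with rfl | hk0
      · simpa using ht
      · rw [habs]
        have : (1 : ℝ) ≤ k := by exact_mod_cast hk0
        push_cast
        nlinarith [abs_nonneg t]
    have h3 := h (k + 1) hk
    rw [key _ h2, habs] at h3
    exact h3

/-- If the skew shift on `𝕋²` (with `a` irrational) satisfies (eTRP), then `a` is not
badly approximable. -/
theorem not_badlyApproximable_of_skew_shift_eTRP (a : ℝ) (hirr : Irrational a)
    (heTRP : Dense {ω : AddCircle (1 : ℝ) × AddCircle (1 : ℝ) |
      EvenRepetitionProperty (skewShift a) ω}) :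
    ¬ BadlyApproximable a := by
  rintro ⟨c, hc, hbad⟩
  obtain ⟨ω, hω⟩ := heTRP.nonempty
  obtain ⟨q, -, hq2, hq⟩ := hω (1 / 8) (by norm_num) (1 + 1 / c) (by positivity)
  set N := ⌊(1 + 1 / c) * (q : ℝ)⌋₊ with hN
  set r : ℝ := ((2 * q : ℤ) : ℝ) * a with hr
  set t : ℝ := r - round r with htdef
  have ht : |t| ≤ 1 / 2 := abs_sub_round r
  have htc : (t : AddCircle (1 : ℝ)) = q • ((2 * a : ℝ) : AddCircle (1 : ℝ)) := by
    rw [← AddCircle.coe_nsmul, htdef, AddCircle.coe_sub]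
    have h0 : (((round r : ℤ) : ℝ) : AddCircle (1 : ℝ)) = 0 := by
      rw [AddCircle.coe_eq_zero_iff]
      exact ⟨round r, by simp⟩
    rw [h0, sub_zero, hr]
    congr 1
    push_cast
    rw [nsmul_eq_mul]
    ring
  have hd : ∀ k : ℕ, k ≤ N → ‖(((skewShift a)^[q] ω).2 - ω.2) +
      k • (q • ((2 * a : ℝ) : AddCircle (1 : ℝ)))‖ < 1 / 8 := by
    intro k hk
    rw [← skew_snd, ← dist_eq_norm, dist_comm]
    refine lt_of_le_of_lt ?_ (hq k hk)
    rw [Prod.dist_eq]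
    exact le_max_right _ _
  have hs : ∀ k : ℕ, k ≤ N → ‖((k * t : ℝ) : AddCircle (1 : ℝ))‖ < 1 / 4 := by
    intro k hk
    have h0 := hd 0 (Nat.zero_le _)
    have h1 := hd k hk
    rw [zero_nsmul, add_zero] at h0
    rw [← nsmul_eq_mul, AddCircle.coe_nsmul, htc]
    have h2 := norm_sub_le ((((skewShift a)^[q] ω).2 - ω.2) +
      k • (q • ((2 * a : ℝ) : AddCircle (1 : ℝ)))) (((skewShift a)^[q] ω).2 - ω.2)
    rw [add_sub_cancel_left] at h2
    linarith
  have hfin := small_multiples_s8 t ht N hs N le_rfl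
  have hb := hbad (2 * q) (by omega)
  have hqr : (2 : ℝ) ≤ q := by exact_mod_cast hq2
  have habs : |((2 * q : ℤ) : ℝ)| = 2 * q := by
    push_cast
    rw [abs_of_nonneg (by positivity)]
  rw [habs, ← hr, ← htdef, div_lt_iff₀ (by positivity)] at hb
  have hNl : (1 + 1 / c) * (q : ℝ) < N + 1 := Nat.lt_floor_add_one _
  have hNq : (1 / c) * (q : ℝ) ≤ N := by nlinarith
  have h5 : (1 / c) * (q : ℝ) * |t| < 1 / 4 :=
    lt_of_le_of_lt (mul_le_mul_of_nonneg_right hNq (abs_nonneg t)) hfin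
  have h6 : (q : ℝ) * |t| < 1 / 4 * c := by
    have := mul_lt_mul_of_pos_right h5 hc
    have e : (1 / c) * (q : ℝ) * |t| * c = q * |t| := by field_simp
    linarith
  linarith

end
end
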